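/- (Power balance of the pointwise actuated Euler–Bernoulli beam.) Let $\rho A, EI > 0$ be constants, $0 < A_1 < A_2 < L$, and let $u^1, u^2 : \mathbb{R}\to\mathbb{R}$. Let $w : \mathbb{R}\times[0,L]\to\mathbb{R}$ be such that $w$, $w_{[1]}$, $w_{[2]}$, $\dot{w}$ and $\dot{w}_{[1]}$ are continuous on $\mathbb{R}\times[0,L]$, $w$ is smooth on each of $\mathbb{R}\times[0,A_1]$, $\mathbb{R}\times[A_1,A_2]$, $\mathbb{R}\times[A_2,L]$ (derivatives one-sided at the interface points), $w$ satisfies $\rho A\,\ddot{w} = -EI\,w_{[4]}$ on each of the three subintervals, the free-end conditions $w_{[2]} = w_{[3]} = 0$ hold at $z=0$ and $z=L$, and the shear-force jump conditions $EI\big(w_{[3]}(t,A_i^+) - w_{[3]}(t,A_i^-)\big) = u^i(t)$ hold for $i=1,2$ and all $t$. Then the total energy $\mathscr{H}(t) = \int_0^L\Big(\frac{\rho A}{2}\dot{w}^2 + \frac{EI}{2}w_{[2]}^2\Big)dz$ satisfies $\frac{d\mathscr{H}}{dt}(t) = u^1(t)\,\dot{w}(t,A_1) + u^2(t)\,\dot{w}(t,A_2)$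 for all $t$, i.e. the power ports of the beam with pointwise forces $u^1,u^2$ are the collocated pairs of point forces and point velocities at $z=A_1$ and $z=A_2$. -/

import Mathlib

open MeasureTheory

/-- Time derivative of a field `f(t,z)`. -/
noncomputable def pT (f : ℝ → ℝ → ℝ) : ℝ → ℝ → ℝ := fun t z => deriv (fun s => f s z) t

/-- Spatial derivative within the set `S` (one-sided at the endpoints of `S`). -/
noncomputable def pZS (S : Set ℝ) (f : ℝ → ℝ → ℝ) : ℝ → ℝ → ℝ :=
  fun t z => derivWithin (fun s => f t s) S z

/-!
On each strip between consecutive actuators the energy density `e` and the power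
`P = EI (ẇ_[1] w_[2] - ẇ w_[3])` transmitted through a cross-section satisfy the continuity
equation `∂e/∂t = ∂P/∂z`, so the energy of the strip changes at the rate given by the difference
of `P` between its two ends. Summing over the strips, `P` vanishes at the free ends, and at an
actuator, where `ẇ`, `ẇ_[1]` and `w_[2]` agree from both sides, only the jump of the shear force
times the velocity survives.
-/

section

open Set Function

variable {S T : Set ℝ} {f w : ℝ → ℝ → ℝ} {m n : WithTop ℕ∞} {t z : ℝ}

theorem hasDerivAt_fderivWithin_time (hf : DifferentiableOn ℝ (uncurry f) (univ ×ˢ S))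
    (hz : z ∈ S) :
    HasDerivAt (fun s => f s z) (fderivWithin ℝ (uncurry f) (univ ×ˢ S) (t, z) (1, 0)) t := by
  have hline : HasDerivWithinAt (fun s : ℝ => (s, z)) ((1 : ℝ), (0 : ℝ)) univ t :=
    ((hasDerivAt_id t).prodMk (hasDerivAt_const t z)).hasDerivWithinAt
  exact hasDerivWithinAt_univ.1 <|
    (hf (t, z) ⟨mem_univ t, hz⟩).hasFDerivWithinAt.comp_hasDerivWithinAt_of_eq t hline
      (fun s _ => ⟨mem_univ s, hz⟩) rfl

theorem hasDerivWithinAt_fderivWithin_space (hf : DifferentiableOn ℝ (uncurry f) (univ ×ˢ S))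
    (hz : z ∈ S) :
    HasDerivWithinAt (f t) (fderivWithin ℝ (uncurry f) (univ ×ˢ S) (t, z) (0, 1)) S z := by
  have hline : HasDerivWithinAt (fun y : ℝ => (t, y)) ((0 : ℝ), (1 : ℝ)) S z :=
    ((hasDerivAt_const z t).prodMk (hasDerivAt_id z)).hasDerivWithinAt
  exact (hf (t, z) ⟨mem_univ t, hz⟩).hasFDerivWithinAt.comp_hasDerivWithinAt_of_eq z hline
    (fun y hy => ⟨mem_univ t, hy⟩) rfl

theorem hasDerivAt_pT (hf : DifferentiableOn ℝ (uncurry f) (univ ×ˢ S)) (hz : z ∈ S) :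
    HasDerivAt (fun s => f s z) (pT f t z) t :=
  (hasDerivAt_fderivWithin_time hf hz).differentiableAt.hasDerivAt

theorem hasDerivWithinAt_pZS (hf : DifferentiableOn ℝ (uncurry f) (univ ×ˢ S)) (hz : z ∈ S) :
    HasDerivWithinAt (f t) (pZS S f t z) S z :=
  (hasDerivWithinAt_fderivWithin_space hf hz).differentiableWithinAt.hasDerivWithinAt

theorem pT_eq_fderivWithin (hf : DifferentiableOn ℝ (uncurry f) (univ ×ˢ S)) (hz : z ∈ S) :
    pT f t z = fderivWithin ℝ (uncurry f) (univ ×ˢ S) (t, z) (1, 0) :=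
  (hasDerivAt_fderivWithin_time hf hz).deriv

theorem pZS_eq_fderivWithin (hS : UniqueDiffOn ℝ S)
    (hf : DifferentiableOn ℝ (uncurry f) (univ ×ˢ S)) (hz : z ∈ S) :
    pZS S f t z = fderivWithin ℝ (uncurry f) (univ ×ˢ S) (t, z) (0, 1) :=
  (hasDerivWithinAt_fderivWithin_space hf hz).derivWithin (hS z hz)

theorem contDiffOn_pT (hS : UniqueDiffOn ℝ S) (hf : ContDiffOn ℝ n (uncurry f) (univ ×ˢ S))
    (hmn : m + 1 ≤ n) : ContDiffOn ℝ m (uncurry (pT f)) (univ ×ˢ S) := by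
  have hdiff := (hf.of_le (le_add_self.trans hmn)).differentiableOn one_ne_zero
  exact ((hf.fderivWithin (uniqueDiffOn_univ.prod hS) hmn).clm_apply contDiffOn_const).congr
    fun q hq => pT_eq_fderivWithin hdiff hq.2

theorem contDiffOn_pZS (hS : UniqueDiffOn ℝ S) (hf : ContDiffOn ℝ n (uncurry f) (univ ×ˢ S))
    (hmn : m + 1 ≤ n) : ContDiffOn ℝ m (uncurry (pZS S f)) (univ ×ˢ S) := by
  have hdiff := (hf.of_le (le_add_self.trans hmn)).differentiableOn one_ne_zero
  exact ((hf.fderivWithin (uniqueDiffOn_univ.prod hS) hmn).clm_apply contDiffOn_const).congr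
    fun q hq => pZS_eq_fderivWithin hS hdiff hq.2

theorem contDiffOn_iterate_pZS (hS : UniqueDiffOn ℝ S)
    (hf : ContDiffOn ℝ n (uncurry f) (univ ×ˢ S)) (k : ℕ) (hmn : m + k ≤ n) :
    ContDiffOn ℝ m (uncurry ((pZS S)^[k] f)) (univ ×ˢ S) := by
  induction k generalizing m with
  | zero => exact hf.of_le (by simpa using hmn)
  | succ k ih =>
    rw [iterate_succ_apply']
    refine contDiffOn_pZS hS (ih (m := m + 1) ?_) le_rfl
    rwa [add_assoc, add_comm 1, ← Nat.cast_succ]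

theorem fderivWithin_fderivWithin_apply {𝕜 E F : Type*} [NontriviallyNormedField 𝕜]
    [NormedAddCommGroup E] [NormedSpace 𝕜 E] [NormedAddCommGroup F] [NormedSpace 𝕜 F]
    {s : Set E} {g : E → F} {x : E} (v e : E) (hs : UniqueDiffWithinAt 𝕜 s x)
    (hg : DifferentiableWithinAt 𝕜 (fderivWithin 𝕜 g s) s x) :
    fderivWithin 𝕜 (fun y => fderivWithin 𝕜 g s y v) s x e =
      fderivWithin 𝕜 (fderivWithin 𝕜 g s) s x e v := by
  simp [fderivWithin_clm_apply hs hg (differentiableWithinAt_const v)]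

theorem pT_pZS_comm (hS : UniqueDiffOn ℝ S) (hf : ContDiffOn ℝ 2 (uncurry f) (univ ×ˢ S))
    (hz : z ∈ S) (hz' : z ∈ closure (interior S)) :
    pT (pZS S f) t z = pZS S (pT f) t z := by
  have hmem : (t, z) ∈ univ ×ˢ S := ⟨mem_univ t, hz⟩
  have hUD := uniqueDiffOn_univ.prod (𝕜 := ℝ) (s := (univ : Set ℝ)) hS
  have hdiff := hf.differentiableOn two_ne_zero
  have hdiff' : DifferentiableOn ℝ (fderivWithin ℝ (uncurry f) (univ ×ˢ S)) (univ ×ˢ S) :=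
    (hf.fderivWithin hUD one_add_one_eq_two.le).differentiableOn one_ne_zero
  have htime : EqOn (uncurry (pT f)) (fun q => fderivWithin ℝ (uncurry f) (univ ×ˢ S) q (1, 0))
      (univ ×ˢ S) := fun q hq => pT_eq_fderivWithin hdiff hq.2
  have hspace : EqOn (uncurry (pZS S f))
      (fun q => fderivWithin ℝ (uncurry f) (univ ×ˢ S) q (0, 1)) (univ ×ˢ S) :=
    fun q hq => pZS_eq_fderivWithin hS hdiff hq.2
  have hsymm : IsSymmSndFDerivWithinAt ℝ (uncurry f) (univ ×ˢ S) (t, z) := by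
    refine (hf _ hmem).isSymmSndFDerivWithinAt (by simp) hUD ?_ hmem
    rw [interior_prod_eq, interior_univ, closure_prod_eq, closure_univ]
    exact ⟨mem_univ t, hz'⟩
  calc pT (pZS S f) t z
      = fderivWithin ℝ (fun q => fderivWithin ℝ (uncurry f) (univ ×ˢ S) q (0, 1))
          (univ ×ˢ S) (t, z) (1, 0) := by
        rw [pT_eq_fderivWithin
          ((contDiffOn_pZS hS hf one_add_one_eq_two.le).differentiableOn one_ne_zero) hz,
          fderivWithin_congr' hspace hmem]
    _ = fderivWithin ℝ (fun q => fderivWithin ℝ (uncurry f) (univ ×ˢ S) q (1, 0))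
          (univ ×ˢ S) (t, z) (0, 1) := by
        rw [fderivWithin_fderivWithin_apply _ _ (hUD _ hmem) (hdiff' _ hmem),
          fderivWithin_fderivWithin_apply _ _ (hUD _ hmem) (hdiff' _ hmem), hsymm]
    _ = pZS S (pT f) t z := by
        rw [pZS_eq_fderivWithin hS
          ((contDiffOn_pT hS hf one_add_one_eq_two.le).differentiableOn one_ne_zero) hz,
          fderivWithin_congr' htime hmem]

theorem pT_iterate_pZS_comm (hS : UniqueDiffOn ℝ S) (hS' : S ⊆ closure (interior S)) (k : ℕ)
    (hf : ContDiffOn ℝ (k + 1) (uncurry f) (univ ×ˢ S)) (hz : z ∈ S) :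
    pT ((pZS S)^[k] f) t z = (pZS S)^[k] (pT f) t z := by
  induction k generalizing z with
  | zero => rfl
  | succ k ih =>
    have hk : ContDiffOn ℝ 2 (uncurry ((pZS S)^[k] f)) (univ ×ˢ S) :=
      contDiffOn_iterate_pZS hS hf k (by
        rw [Nat.cast_succ, add_assoc, one_add_one_eq_two, add_comm])
    have ih' : EqOn (pT ((pZS S)^[k] f) t) ((pZS S)^[k] (pT f) t) S := fun y hy =>
      ih (hf.of_le (by simp)) hy
    rw [iterate_succ_apply', iterate_succ_apply', pT_pZS_comm hS hk hz (hS' hz)]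
    exact derivWithin_congr ih' (ih' hz)

theorem iterate_pZS_eq_of_mem_interior (hST : S ⊆ T) (k : ℕ) (hz : z ∈ interior S) :
    (pZS T)^[k] f t z = (pZS S)^[k] f t z := by
  induction k generalizing z with
  | zero => rfl
  | succ k ih =>
    have hS : S ∈ nhds z := mem_interior_iff_mem_nhds.1 hz
    have hloc : (pZS T)^[k] f t =ᶠ[nhds z] (pZS S)^[k] f t :=
      (isOpen_interior.eventually_mem hz).mono fun y hy => ih hy
    simp only [iterate_succ_apply', pZS]
    rw [derivWithin_of_mem_nhds (Filter.mem_of_superset hS hST), derivWithin_of_mem_nhds hS]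
    exact hloc.deriv_eq

theorem continuousOn_uncurry_slice (hf : ContinuousOn (uncurry f) (univ ×ˢ S)) (t : ℝ) :
    ContinuousOn (f t) S :=
  hf.comp (f := fun y => (t, y)) (by fun_prop) fun y hy => ⟨mem_univ t, hy⟩

theorem hasDerivAt_intervalIntegral_pT {a b : ℝ} (hab : a < b)
    (hf : ContDiffOn ℝ 1 (uncurry f) (univ ×ˢ Icc a b)) (t : ℝ) :
    HasDerivAt (fun s => ∫ z in a..b, f s z) (∫ z in a..b, pT f t z) t := by
  have hfT : ContinuousOn (uncurry (pT f)) (univ ×ˢ Icc a b) :=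
    (contDiffOn_pT (uniqueDiffOn_Icc hab) hf (zero_add 1).le).continuousOn
  have hint (g : ℝ → ℝ → ℝ) (hg : ContinuousOn (uncurry g) (univ ×ˢ Icc a b)) (s : ℝ) :
      IntervalIntegrable (g s) volume a b :=
    (continuousOn_uncurry_slice hg s).intervalIntegrable_of_Icc hab.le
  have hIcc {z : ℝ} (hz : z ∈ uIoc a b) : z ∈ Icc a b :=
    Ioc_subset_Icc_self (uIoc_of_le hab.le ▸ hz)
  obtain ⟨C, hC⟩ := ((isCompact_Icc (a := t - 1) (b := t + 1)).prod
    (isCompact_Icc (a := a) (b := b))).exists_bound_of_continuousOn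
      (hfT.mono (prod_mono_left (subset_univ _)))
  exact (intervalIntegral.hasDerivAt_integral_of_dominated_loc_of_deriv_le
    (bound := fun _ => C) (Icc_mem_nhds (sub_one_lt t) (lt_add_one t))
    (.of_forall fun s => (hint f hf.continuousOn s).def'.aestronglyMeasurable)
    (hint f hf.continuousOn t) (hint (pT f) hfT t).def'.aestronglyMeasurable
    (.of_forall fun z hz s hs => hC (s, z) ⟨hs, hIcc hz⟩) intervalIntegrable_const
    (.of_forall fun z hz s _ => hasDerivAt_pT (hf.differentiableOn one_ne_zero) (hIcc hz))).2

/-- Energy per unit length of the beam `w`: kinetic energy plus bending energy, the curvature being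
taken within `S`. -/
noncomputable def beamEnergyDensity (ρA EI : ℝ) (S : Set ℝ) (w : ℝ → ℝ → ℝ) : ℝ → ℝ → ℝ :=
  fun t z => ρA / 2 * pT w t z ^ 2 + EI / 2 * (pZS S)^[2] w t z ^ 2

/-- Power that the bending moment and the shear force at the cross-section `z` deliver to the part
of the beam on the left of `z`, the spatial derivatives being taken within `S`. -/
noncomputable def beamPower (EI : ℝ) (S : Set ℝ) (w : ℝ → ℝ → ℝ) : ℝ → ℝ → ℝ :=
  fun t z => EI * (pZS S (pT w) t z * (pZS S)^[2] w t z - pT w t z * (pZS S)^[3] w t z)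

variable {ρA EI : ℝ}

theorem contDiffOn_beamEnergyDensity (hS : UniqueDiffOn ℝ S)
    (hw : ContDiffOn ℝ n (uncurry w) (univ ×ˢ S)) (hmn : m + 2 ≤ n) :
    ContDiffOn ℝ m (uncurry (beamEnergyDensity ρA EI S w)) (univ ×ˢ S) := by
  have hmn' : m + 1 ≤ n := (add_le_add_right one_le_two m).trans hmn
  exact (contDiffOn_const.mul ((contDiffOn_pT hS hw hmn').pow 2)).add
    (contDiffOn_const.mul ((contDiffOn_iterate_pZS hS hw 2 hmn).pow 2))

theorem pT_beamEnergyDensity (hS : UniqueDiffOn ℝ S) (hS' : S ⊆ closure (interior S))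
    (hw : ContDiffOn ℝ 3 (uncurry w) (univ ×ˢ S)) (hz : z ∈ S) :
    pT (beamEnergyDensity ρA EI S w) t z =
      ρA * pT w t z * pT (pT w) t z
        + EI * (pZS S)^[2] w t z * (pZS S)^[2] (pT w) t z := by
  have hvel : HasDerivAt (fun s => pT w s z) (pT (pT w) t z) t :=
    hasDerivAt_pT ((contDiffOn_pT hS hw (m := 1) (by norm_num)).differentiableOn one_ne_zero) hz
  have hcurv : HasDerivAt (fun s => (pZS S)^[2] w s z) ((pZS S)^[2] (pT w) t z) t := by
    rw [← pT_iterate_pZS_comm hS hS' 2 (hw.of_le (by norm_num)) hz]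
    exact hasDerivAt_pT ((contDiffOn_iterate_pZS hS hw (m := 1) 2 (by norm_num)).differentiableOn
      one_ne_zero) hz
  refine (((hvel.pow 2).const_mul (ρA / 2)).add ((hcurv.pow 2).const_mul (EI / 2))).deriv.trans ?_
  ring

theorem hasDerivWithinAt_beamPower (hS : UniqueDiffOn ℝ S)
    (hw : ContDiffOn ℝ 4 (uncurry w) (univ ×ˢ S)) (hz : z ∈ S) :
    HasDerivWithinAt (beamPower EI S w t)
      (EI * ((pZS S)^[2] (pT w) t z * (pZS S)^[2] w t z - pT w t z * (pZS S)^[4] w t z)) S z := by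
  have hderiv (g : ℝ → ℝ → ℝ) (hg : ContDiffOn ℝ 1 (uncurry g) (univ ×ˢ S)) :
      HasDerivWithinAt (g t) (pZS S g t z) S z :=
    hasDerivWithinAt_pZS (hg.differentiableOn one_ne_zero) hz
  have hv : ContDiffOn ℝ 2 (uncurry (pT w)) (univ ×ˢ S) := contDiffOn_pT hS hw (by norm_num)
  have hv₁ := contDiffOn_pZS hS hv one_add_one_eq_two.le
  have hw₂ : ContDiffOn ℝ 1 (uncurry ((pZS S)^[2] w)) (univ ×ˢ S) :=
    contDiffOn_iterate_pZS hS hw 2 (by norm_num)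
  have hw₃ : ContDiffOn ℝ 1 (uncurry ((pZS S)^[3] w)) (univ ×ˢ S) :=
    contDiffOn_iterate_pZS hS hw 3 (by norm_num)
  refine ((((hderiv _ hv₁).mul (hderiv _ hw₂)).sub
    ((hderiv _ (hv.of_le one_le_two)).mul (hderiv _ hw₃))).const_mul EI).congr_deriv ?_
  simp only [iterate_succ_apply', iterate_zero_apply]
  ring

theorem hasDerivWithinAt_beamPower_of_beam_equation (hS : UniqueDiffOn ℝ S)
    (hS' : S ⊆ closure (interior S)) (hw : ContDiffOn ℝ 4 (uncurry w) (univ ×ˢ S))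
    (hz : z ∈ S) (hbeam : ρA * pT (pT w) t z = -EI * (pZS S)^[4] w t z) :
    HasDerivWithinAt (beamPower EI S w t) (pT (beamEnergyDensity ρA EI S w) t z) S z := by
  refine (hasDerivWithinAt_beamPower hS hw hz).congr_deriv ?_
  rw [pT_beamEnergyDensity hS hS' (hw.of_le (by norm_num)) hz]
  linear_combination -pT w t z * hbeam

theorem hasDerivAt_integral_beamEnergyDensity {a b : ℝ} (hab : a < b)
    (hw : ContDiffOn ℝ 4 (uncurry w) (univ ×ˢ Icc a b))
    (hbeam : ∀ z ∈ Icc a b, ρA * pT (pT w) t z = -EI * (pZS (Icc a b))^[4] w t z) :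
    HasDerivAt (fun s => ∫ z in a..b, beamEnergyDensity ρA EI (Icc a b) w s z)
      (beamPower EI (Icc a b) w t b - beamPower EI (Icc a b) w t a) t := by
  have hS := uniqueDiffOn_Icc hab
  have he : ContDiffOn ℝ 2 (uncurry (beamEnergyDensity ρA EI (Icc a b) w)) (univ ×ˢ Icc a b) :=
    contDiffOn_beamEnergyDensity hS hw (by norm_num)
  have heT : ContDiffOn ℝ 1 (uncurry (pT (beamEnergyDensity ρA EI (Icc a b) w)))
      (univ ×ˢ Icc a b) := contDiffOn_pT hS he one_add_one_eq_two.le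
  have hcont (z : ℝ) (hz : z ∈ Icc a b) : HasDerivWithinAt (beamPower EI (Icc a b) w t)
      (pT (beamEnergyDensity ρA EI (Icc a b) w) t z) (Icc a b) z :=
    hasDerivWithinAt_beamPower_of_beam_equation hS (closure_interior_Icc hab.ne).ge hw hz
      (hbeam z hz)
  refine (hasDerivAt_intervalIntegral_pT hab (he.of_le one_le_two) t).congr_deriv ?_
  exact intervalIntegral.integral_eq_sub_of_hasDerivAt_of_le hab.le
    (fun z hz => (hcont z hz).continuousWithinAt)
    (fun z hz => (hcont z (Ioo_subset_Icc_self hz)).hasDerivAt (Icc_mem_nhds hz.1 hz.2))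
    ((continuousOn_uncurry_slice heT.continuousOn t).intervalIntegrable_of_Icc hab.le)

theorem beamEnergyDensity_eqOn_Ioo {a b : ℝ} (hT : Icc a b ⊆ T) :
    EqOn (beamEnergyDensity ρA EI (Icc a b) w t) (beamEnergyDensity ρA EI T w t) (Ioo a b) := by
  intro z hz
  simp only [beamEnergyDensity,
    iterate_pZS_eq_of_mem_interior hT 2 (interior_Icc (a := a) (b := b) ▸ hz)]

theorem intervalIntegrable_beamEnergyDensity {a b : ℝ} (hab : a < b)
    (hw : ContDiffOn ℝ 2 (uncurry w) (univ ×ˢ Icc a b)) (hT : Icc a b ⊆ T) :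
    IntervalIntegrable (beamEnergyDensity ρA EI T w t) volume a b := by
  have he : ContDiffOn ℝ 0 (uncurry (beamEnergyDensity ρA EI (Icc a b) w)) (univ ×ˢ Icc a b) :=
    contDiffOn_beamEnergyDensity (uniqueDiffOn_Icc hab) hw (zero_add 2).le
  refine ((continuousOn_uncurry_slice he.continuousOn t).intervalIntegrable_of_Icc
    hab.le).congr_uIoo ?_
  rw [uIoo_of_le hab.le]
  exact beamEnergyDensity_eqOn_Ioo hT

theorem beamPower_eq_zero_of_free_end (hmoment : (pZS S)^[2] w t z = 0)
    (hshear : (pZS S)^[3] w t z = 0) : beamPower EI S w t z = 0 := by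
  simp [beamPower, hmoment, hshear]

theorem beamPower_sub_beamPower (hslope : pZS S (pT w) t z = pZS T (pT w) t z)
    (hmoment : (pZS S)^[2] w t z = (pZS T)^[2] w t z) :
    beamPower EI S w t z - beamPower EI T w t z =
      EI * ((pZS T)^[3] w t z - (pZS S)^[3] w t z) * pT w t z := by
  rw [beamPower, beamPower, hslope, hmoment]
  ring

open Fin.NatCast in
theorem sum_integral_adjacent_intervals_fin {E : Type*} [NormedAddCommGroup E] [NormedSpace ℝ E]
    {μ : Measure ℝ} {g : ℝ → E} {N : ℕ} {A : Fin (N + 1) → ℝ}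
    (hg : ∀ i : Fin N, IntervalIntegrable g μ (A i.castSucc) (A i.succ)) :
    ∑ i : Fin N, ∫ x in A i.castSucc..A i.succ, g x ∂μ = ∫ x in A 0..A (Fin.last N), g x ∂μ := by
  have hint (i : Fin N) :
      IntervalIntegrable g μ (A (i : ℕ)) (A ((i + 1 : ℕ) : Fin (N + 1))) := by
    simpa using hg i
  have hsum := intervalIntegral.sum_integral_adjacent_intervals (n := N)
    (a := fun k => A (k : Fin (N + 1))) fun k hk => hint ⟨k, hk⟩
  rw [← Fin.sum_univ_eq_sum_range] at hsum
  simpa using hsum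

theorem sum_fin_sub_eq_add_sum_sub {M : Type*} [AddCommGroup M] {N : ℕ} (p q : Fin (N + 1) → M) :
    ∑ i, (p i - q i) = p (Fin.last N) - q 0 + ∑ i : Fin N, (p i.castSucc - q i.succ) := by
  rw [Finset.sum_sub_distrib, Finset.sum_sub_distrib, Fin.sum_univ_castSucc p, Fin.sum_univ_succ q]
  abel

/-- The `i`-th of the closed strips into which the points `A 0 < A 1 < ⋯` cut the beam. The point
`A i.succ.castSucc = A i.castSucc.succ` separates the strips `i.castSucc` and `i.succ`. -/
def beamStrip {N : ℕ} (A : Fin (N + 2) → ℝ) (i : Fin (N + 1)) : Set ℝ :=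
  Icc (A i.castSucc) (A i.succ)

theorem beamStrip_subset {N : ℕ} {A : Fin (N + 2) → ℝ} (hA : Monotone A) (i : Fin (N + 1)) :
    beamStrip A i ⊆ Icc (A 0) (A (Fin.last (N + 1))) :=
  Icc_subset_Icc (hA (Fin.zero_le _)) (hA (Fin.le_last _))

theorem integral_beamEnergyDensity_eq_sum {N : ℕ} {A : Fin (N + 2) → ℝ} (hA : StrictMono A)
    (hw : ∀ i, ContDiffOn ℝ 2 (uncurry w) (univ ×ˢ beamStrip A i)) :
    ∫ z in A 0..A (Fin.last (N + 1)),
        beamEnergyDensity ρA EI (Icc (A 0) (A (Fin.last (N + 1)))) w t z =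
      ∑ i : Fin (N + 1), ∫ z in A i.castSucc..A i.succ,
        beamEnergyDensity ρA EI (beamStrip A i) w t z := by
  have hlt (i : Fin (N + 1)) : A i.castSucc < A i.succ := hA i.castSucc_lt_succ
  rw [← sum_integral_adjacent_intervals_fin fun i =>
    intervalIntegrable_beamEnergyDensity (hlt i) (hw i) (beamStrip_subset hA.monotone i)]
  refine Finset.sum_congr rfl fun i _ => ?_
  exact intervalIntegral.integral_congr_Ioo_of_le (hlt i).le
    (beamEnergyDensity_eqOn_Ioo (beamStrip_subset hA.monotone i)).symm

theorem statement12_general {N : ℕ} {A : Fin (N + 2) → ℝ} (hA : StrictMono A)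
    (u : Fin N → ℝ → ℝ)
    (hw : ∀ i, ContDiffOn ℝ 4 (uncurry w) (univ ×ˢ beamStrip A i))
    (hmoment : ∀ i : Fin N,
      (pZS (beamStrip A i.castSucc))^[2] w t (A i.castSucc.succ)
        = (pZS (beamStrip A i.succ))^[2] w t (A i.castSucc.succ))
    (hslope : ∀ i : Fin N,
      pZS (beamStrip A i.castSucc) (pT w) t (A i.castSucc.succ)
        = pZS (beamStrip A i.succ) (pT w) t (A i.castSucc.succ))
    (hbeam : ∀ i, ∀ z ∈ beamStrip A i,
      ρA * pT (pT w) t z = -EI * (pZS (beamStrip A i))^[4] w t z)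
    (hleft : (pZS (beamStrip A 0))^[2] w t (A 0) = 0 ∧ (pZS (beamStrip A 0))^[3] w t (A 0) = 0)
    (hright : (pZS (beamStrip A (Fin.last N)))^[2] w t (A (Fin.last (N + 1))) = 0
      ∧ (pZS (beamStrip A (Fin.last N)))^[3] w t (A (Fin.last (N + 1))) = 0)
    (hjump : ∀ i : Fin N,
      EI * ((pZS (beamStrip A i.succ))^[3] w t (A i.castSucc.succ)
        - (pZS (beamStrip A i.castSucc))^[3] w t (A i.castSucc.succ)) = u i t) :
    HasDerivAt
      (fun τ => ∫ z in A 0..A (Fin.last (N + 1)),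
        beamEnergyDensity ρA EI (Icc (A 0) (A (Fin.last (N + 1)))) w τ z)
      (∑ i : Fin N, u i t * pT w t (A i.castSucc.succ)) t := by
  have hport (i : Fin N) : beamPower EI (beamStrip A i.castSucc) w t (A i.castSucc.succ)
      - beamPower EI (beamStrip A i.succ) w t (A i.succ.castSucc)
        = u i t * pT w t (A i.castSucc.succ) :=
    (beamPower_sub_beamPower (hslope i) (hmoment i)).trans (by rw [hjump i])
  simp only [integral_beamEnergyDensity_eq_sum hA fun i => (hw i).of_le (by norm_num)]
  refine (HasDerivAt.fun_sum fun i _ =>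
    hasDerivAt_integral_beamEnergyDensity (hA i.castSucc_lt_succ) (hw i) (hbeam i)).congr_deriv ?_
  calc ∑ i : Fin (N + 1), (beamPower EI (beamStrip A i) w t (A i.succ)
          - beamPower EI (beamStrip A i) w t (A i.castSucc))
      = beamPower EI (beamStrip A (Fin.last N)) w t (A (Fin.last (N + 1)))
          - beamPower EI (beamStrip A 0) w t (A 0)
          + ∑ i : Fin N, (beamPower EI (beamStrip A i.castSucc) w t (A i.castSucc.succ)
              - beamPower EI (beamStrip A i.succ) w t (A i.succ.castSucc)) :=
        sum_fin_sub_eq_add_sum_sub _ _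
    _ = ∑ i : Fin N, u i t * pT w t (A i.castSucc.succ) := by
        rw [beamPower_eq_zero_of_free_end hright.1 hright.2,
          beamPower_eq_zero_of_free_end hleft.1 hleft.2, sub_zero, zero_add]
        exact Finset.sum_congr rfl fun i _ => hport i

end

/-- power balance of the pointwise actuated Euler–Bernoulli beam:
the power ports are the collocated pairs of point forces and point velocities at the
actuation points `A₁, A₂`. -/
theorem statement12 (ρA EI L A1 A2 : ℝ) (hρA : 0 < ρA) (hEI : 0 < EI)
    (hA1 : 0 < A1) (hA12 : A1 < A2) (hA2L : A2 < L)
    (u1 u2 : ℝ → ℝ)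
    (w : ℝ → ℝ → ℝ)
    -- `w` is smooth on each of the three strips
    (hw1 : ContDiffOn ℝ (⊤ : ℕ∞) (fun q : ℝ × ℝ => w q.1 q.2) (Set.univ ×ˢ Set.Icc 0 A1))
    (hw2 : ContDiffOn ℝ (⊤ : ℕ∞) (fun q : ℝ × ℝ => w q.1 q.2) (Set.univ ×ˢ Set.Icc A1 A2))
    (hw3 : ContDiffOn ℝ (⊤ : ℕ∞) (fun q : ℝ × ℝ => w q.1 q.2) (Set.univ ×ˢ Set.Icc A2 L))
    -- `w` and `ẇ` are continuous on `ℝ × [0,L]`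
    (hwc : ContinuousOn (fun q : ℝ × ℝ => w q.1 q.2) (Set.univ ×ˢ Set.Icc 0 L))
    (hwtc : ContinuousOn (fun q : ℝ × ℝ => pT w q.1 q.2) (Set.univ ×ˢ Set.Icc 0 L))
    -- `w_[1]`, `w_[2]` and `ẇ_[1]` are continuous across the interface points
    (hw1c : ∀ t : ℝ,
      pZS (Set.Icc 0 A1) w t A1 = pZS (Set.Icc A1 A2) w t A1
      ∧ pZS (Set.Icc A1 A2) w t A2 = pZS (Set.Icc A2 L) w t A2)
    (hw2c : ∀ t : ℝ,
      pZS (Set.Icc 0 A1) (pZS (Set.Icc 0 A1) w) t A1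
        = pZS (Set.Icc A1 A2) (pZS (Set.Icc A1 A2) w) t A1
      ∧ pZS (Set.Icc A1 A2) (pZS (Set.Icc A1 A2) w) t A2
        = pZS (Set.Icc A2 L) (pZS (Set.Icc A2 L) w) t A2)
    (hwt1c : ∀ t : ℝ,
      pZS (Set.Icc 0 A1) (pT w) t A1 = pZS (Set.Icc A1 A2) (pT w) t A1
      ∧ pZS (Set.Icc A1 A2) (pT w) t A2 = pZS (Set.Icc A2 L) (pT w) t A2)
    -- the beam equation `ρA ẅ = -EI w_[4]` on each of the three subintervals
    (hpde1 : ∀ t : ℝ, ∀ z ∈ Set.Icc (0:ℝ) A1,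
      ρA * pT (pT w) t z
        = -EI * pZS (Set.Icc 0 A1) (pZS (Set.Icc 0 A1)
            (pZS (Set.Icc 0 A1) (pZS (Set.Icc 0 A1) w))) t z)
    (hpde2 : ∀ t : ℝ, ∀ z ∈ Set.Icc A1 A2,
      ρA * pT (pT w) t z
        = -EI * pZS (Set.Icc A1 A2) (pZS (Set.Icc A1 A2)
            (pZS (Set.Icc A1 A2) (pZS (Set.Icc A1 A2) w))) t z)
    (hpde3 : ∀ t : ℝ, ∀ z ∈ Set.Icc A2 L,
      ρA * pT (pT w) t z
        = -EI * pZS (Set.Icc A2 L) (pZS (Set.Icc A2 L)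
            (pZS (Set.Icc A2 L) (pZS (Set.Icc A2 L) w))) t z)
    -- free-end conditions `w_[2] = w_[3] = 0` at `z = 0` and `z = L`
    (hbc : ∀ t : ℝ,
      pZS (Set.Icc 0 A1) (pZS (Set.Icc 0 A1) w) t 0 = 0
      ∧ pZS (Set.Icc 0 A1) (pZS (Set.Icc 0 A1) (pZS (Set.Icc 0 A1) w)) t 0 = 0
      ∧ pZS (Set.Icc A2 L) (pZS (Set.Icc A2 L) w) t L = 0
      ∧ pZS (Set.Icc A2 L) (pZS (Set.Icc A2 L) (pZS (Set.Icc A2 L) w)) t L = 0)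
    -- the shear-force jump conditions `EI (w_[3](t,Aᵢ⁺) - w_[3](t,Aᵢ⁻)) = uⁱ(t)`
    (hjump1 : ∀ t : ℝ,
      EI * (pZS (Set.Icc A1 A2) (pZS (Set.Icc A1 A2) (pZS (Set.Icc A1 A2) w)) t A1
        - pZS (Set.Icc 0 A1) (pZS (Set.Icc 0 A1) (pZS (Set.Icc 0 A1) w)) t A1) = u1 t)
    (hjump2 : ∀ t : ℝ,
      EI * (pZS (Set.Icc A2 L) (pZS (Set.Icc A2 L) (pZS (Set.Icc A2 L) w)) t A2
        - pZS (Set.Icc A1 A2) (pZS (Set.Icc A1 A2) (pZS (Set.Icc A1 A2) w)) t A2) = u2 t)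
    (t : ℝ) :
    HasDerivAt
      (fun τ => ∫ z in (0:ℝ)..L,
        (ρA / 2 * (pT w τ z) ^ 2
          + EI / 2 * (pZS (Set.Icc 0 L) (pZS (Set.Icc 0 L) w) τ z) ^ 2))
      (u1 t * pT w t A1 + u2 t * pT w t A2) t := by
  have hA : StrictMono ![0, A1, A2, L] :=
    Fin.strictMono_iff_lt_succ.2 fun | 0 => hA1 | 1 => hA12 | 2 => hA2L
  obtain ⟨hmoment0, hshear0, hmomentL, hshearL⟩ := hbc t
  exact (statement12_general hA ![u1, u2]
    (fun
      | 0 => contDiffOn_infty.1 hw1 4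
      | 1 => contDiffOn_infty.1 hw2 4
      | 2 => contDiffOn_infty.1 hw3 4)
    (fun | 0 => (hw2c t).1 | 1 => (hw2c t).2)
    (fun | 0 => (hwt1c t).1 | 1 => (hwt1c t).2)
    (fun | 0 => hpde1 t | 1 => hpde2 t | 2 => hpde3 t)
    ⟨hmoment0, hshear0⟩ ⟨hmomentL, hshearL⟩
    (fun | 0 => hjump1 t | 1 => hjump2 t)).congr_deriv (Fin.sum_univ_two _)
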